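/- For every k : ℕ there exists m : ℕ such that for every Pinwheel Scheduling instance a with k tasks, a is schedulable if and only if the instance i ↦ min (a i) m, obtained by capping all frequencies at m, is schedulable. -/

import Mathlib

/-- A schedule `S` is valid for the Pinwheel Scheduling instance `a` if every task `i`
is executed at least once in every window of `a i` consecutive days. -/
def IsValidSchedule {k : ℕ} (a : Fin k → ℕ) (S : ℕ → Option (Fin k)) : Prop :=
  ∀ i : Fin k, ∀ t : ℕ, ∃ t', t ≤ t' ∧ t' < t + a i ∧ S t' = some i

/-- A Pinwheel Scheduling instance is schedulable if some valid schedule exists. -/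
def Schedulable {k : ℕ} (a : Fin k → ℕ) : Prop :=
  ∃ S : ℕ → Option (Fin k), IsValidSchedule a S

/-! The schedulable instances form an upper set of `Fin k → ℕ`. By Dickson's lemma this order is a
well-quasi-order, so the antichain of minimal schedulable instances is finite, hence bounded above.
Capping at such a bound keeps a schedulable instance above some minimal one. -/

theorem exists_forall_ge_mem_iff_inf_mem {α : Type*} [SemilatticeInf α] [IsDirectedOrder α]
    [Nonempty α] [WellQuasiOrderedLE α] {s : Set α} (hs : IsUpperSet s) :
    ∃ M : α, ∀ c ≥ M, ∀ a, a ∈ s ↔ a ⊓ c ∈ s := by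
  have finite_minimal : {b | Minimal (· ∈ s) b}.Finite :=
    WellQuasiOrderedLE.finite_of_isAntichain (setOfPred_minimal_antichain _)
  obtain ⟨M, minimal_le⟩ := finite_minimal.bddAbove
  refine ⟨M, fun c hMc a => ⟨fun ha => ?_, hs inf_le_left⟩⟩
  obtain ⟨b, hba, hb⟩ := exists_minimal_le_of_wellFoundedLT (· ∈ s) a ha
  exact hs (le_inf hba ((minimal_le hb).trans hMc)) hb.prop

theorem IsValidSchedule.mono {k : ℕ} {a b : Fin k → ℕ} {S : ℕ → Option (Fin k)}
    (hS : IsValidSchedule a S) (hab : a ≤ b) : IsValidSchedule b S := fun i t =>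
  let ⟨t', hle, hlt, hSt'⟩ := hS i t
  ⟨t', hle, hlt.trans_le (Nat.add_le_add_left (hab i) t), hSt'⟩

theorem isUpperSet_setOfPred_schedulable (k : ℕ) :
    IsUpperSet {a : Fin k → ℕ | Schedulable a} :=
  fun _ _ hab ⟨S, hS⟩ => ⟨S, hS.mono hab⟩

theorem frequency_capping (k : ℕ) :
    ∃ m : ℕ, ∀ a : Fin k → ℕ,
      Schedulable a ↔ Schedulable (fun i => min (a i) m) := by
  obtain ⟨M, hM⟩ := exists_forall_ge_mem_iff_inf_mem (isUpperSet_setOfPred_schedulable k)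
  obtain ⟨m, hMm⟩ := Finite.exists_le M
  exact ⟨m, hM (fun _ => m) hMm⟩
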